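/- arXiv:1605.05656 — 2 statements merged into one kernel-verified Lean document; each statement's English description precedes it below -/
import Mathlib

section
/- Let Ω be a compact Hausdorff space and let H be a complex Hilbert space. Then every weak-2-local derivation Δ : C(Ω,B(H)) → C(Ω,B(H)) is linear and a derivation. -/
/-- A (complex-linear) derivation on a complex normed algebra. -/
def IsCDerivation {B : Type*} [NonUnitalNormedRing B] [NormedSpace ℂ B] (D : B → B) : Prop :=
  (∀ x y : B, D (x + y) = D x + D y) ∧ (∀ (c : ℂ) (x : B), D (c • x) = c • D x) ∧
  (∀ x y : B, D (x * y) = D x * y + x * D y)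

def IsWeak2LocalDerivation {B : Type*} [NonUnitalNormedRing B] [NormedSpace ℂ B]
    (Δ : B → B) : Prop :=
  ∀ (x y : B) (φ : B →L[ℂ] ℂ), ∃ D : B → B,
    IsCDerivation D ∧ φ (Δ x) = φ (D x) ∧ φ (Δ y) = φ (D y)

/-!
A derivation `D` of `B(X)` is spatial, `D x = T x - x T` for some linear `T`, so the trace pairing
`(s, t) ↦ tr (s D(t))` on finite-rank operators is alternating. The identity `tr (t D(t)) = 0` and
its polarization can be tested with one functional at two points, so both are inherited by a
weak-2-local derivation `Δ`, and `tr (s Δ(t)) = -tr (t Δ(s))` makes `Δ` additive on finite-rank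
operators. Additivity everywhere follows because
`e Δ(x) f` does not change when `x` is replaced by `x f + e x - e x f`, for idempotents `e`, `f`.
The Leibniz rule comes from `a Δ(b) c = 0` whenever `a b = b c = 0`: applied to corners of
idempotents, it gives the rule on the span of the idempotents, which contains the finite-rank
operators, and it extends to `B(X)` because these form a separating ideal.
On `C(Ω, A)`, a derivation maps functions vanishing at `t` to functions vanishing at `t`, because
`f = √‖f‖ · (f / √‖f‖)` is a product of two such functions; so everything reduces to fibers.
-/

open scoped TensorProduct

section ZeroProducts

/-- Maps `δ` on a ring with `a δ(b) c = 0` whenever `a b = b c = 0`: the property of derivations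
that survives passing to weak-2-local derivations and still forces the Leibniz rule. -/
def AnnihilatesZeroProducts {A : Type*} [MulZeroClass A] (δ : A → A) : Prop :=
  ∀ a b c : A, a * b = 0 → b * c = 0 → a * δ b * c = 0

/-- An ideal large enough that an element of the ring vanishes as soon as all its corners `e z f`
with idempotents `e`, `f` of the ideal do; the model is the ideal of finite-rank operators. -/
def SeparatedByIdempotents {A : Type*} [Ring A] (J : TwoSidedIdeal A) : Prop :=
  ∀ z : A, (∀ e ∈ J, ∀ f ∈ J, IsIdempotentElem e → IsIdempotentElem f → e * z * f = 0) → z = 0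

variable {R A : Type*} [CommRing R] [Ring A] [Algebra R A] {δ : A →ₗ[R] A}

namespace AnnihilatesZeroProducts

lemma map_mul_mul_add_of_isIdempotentElem (hδ : AnnihilatesZeroProducts δ) {e f : A}
    (he : IsIdempotentElem e) (hf : IsIdempotentElem f) (x : A) :
    δ (e * x * f) + e * δ x * f = δ (e * x) * f + e * δ (x * f) := by
  have corner {g p q k : A} (hgp : g * p = 0) (hqk : q * k = 0) :
      g * δ (p * x * q) * k = 0 :=
    hδ _ _ _ (by simp only [← mul_assoc, hgp, zero_mul]) (by rw [mul_assoc, hqk, mul_zero])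
  have h₁ := corner he.one_sub_mul_self hf.mul_one_sub_self
  have h₂ := corner he.mul_one_sub_self hf.mul_one_sub_self
  have h₃ := corner he.one_sub_mul_self hf.one_sub_mul_self
  have h₄ := corner he.mul_one_sub_self hf.one_sub_mul_self
  simp only [sub_mul, mul_sub, one_mul, mul_one, map_sub] at h₁ h₂ h₃ h₄
  linear_combination (norm := abel) h₁ - h₂ - h₃ + h₄

lemma map_mul_mul_add (hδ : AnnihilatesZeroProducts δ) {e f : A}
    (he : e ∈ Submodule.span R {p : A | IsIdempotentElem p})
    (hf : f ∈ Submodule.span R {p : A | IsIdempotentElem p}) (x : A) :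
    δ (e * x * f) + e * δ x * f = δ (e * x) * f + e * δ (x * f) := by
  induction he, hf using Submodule.span_induction₂ with
  | mem_mem e f he hf => exact hδ.map_mul_mul_add_of_isIdempotentElem he hf x
  | zero_left | zero_right => simp
  | add_left e e' f _ _ _ h h' =>
    simp only [add_mul, map_add]
    linear_combination (norm := abel) h + h'
  | add_right e f f' _ _ _ h h' =>
    simp only [mul_add, map_add]
    linear_combination (norm := abel) h + h'
  | smul_left c e f _ _ h => simp only [smul_mul_assoc, map_smul, ← smul_add, h]
  | smul_right c e f _ _ h => simp only [mul_smul_comm, map_smul, ← smul_add, h]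

variable {J : TwoSidedIdeal A}

lemma map_mul_of_mem_right (hδ : AnnihilatesZeroProducts δ) (hone : δ 1 = 0)
    (hspan : (J : Set A) ⊆ Submodule.span R {p : A | IsIdempotentElem p})
    (hsep : SeparatedByIdempotents J) (x : A) {f : A} (hf : f ∈ J) :
    δ (x * f) = δ x * f + x * δ f := by
  have leibniz {e : A} (he : e ∈ J) : δ (e * f) = δ e * f + e * δ f := by
    simpa [hone] using hδ.map_mul_mul_add (hspan he) (hspan hf) 1
  have left {e : A} (he : e ∈ J) : e * δ (x * f) = e * (δ x * f + x * δ f) := by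
    have h₁ := hδ.map_mul_mul_add (hspan he) (hspan hf) x
    have h₂ := leibniz (J.mul_mem_right e x he)
    rw [mul_add, ← mul_assoc, ← mul_assoc]
    linear_combination (norm := abel) h₂ - h₁
  refine sub_eq_zero.1 (hsep _ fun e he _ _ _ _ => ?_)
  rw [mul_sub, left he, sub_self, zero_mul]

theorem map_mul (hδ : AnnihilatesZeroProducts δ) (hone : δ 1 = 0)
    (hspan : (J : Set A) ⊆ Submodule.span R {p : A | IsIdempotentElem p})
    (hsep : SeparatedByIdempotents J) (x y : A) :
    δ (x * y) = δ x * y + x * δ y := by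
  have right {f : A} (hf : f ∈ J) : δ (x * y) * f = (δ x * y + x * δ y) * f := by
    have leibniz := fun z {g : A} => hδ.map_mul_of_mem_right hone hspan hsep z (f := g)
    have h := leibniz x (J.mul_mem_left y f hf)
    rw [← mul_assoc, leibniz (x * y) hf, leibniz y hf] at h
    simp only [mul_add, add_mul, mul_assoc] at h ⊢
    linear_combination (norm := abel) h
  refine sub_eq_zero.1 (hsep _ fun e _ f hf _ _ => ?_)
  rw [mul_assoc, sub_mul, right hf, sub_self, mul_zero]

end AnnihilatesZeroProducts

end ZeroProducts

namespace IsCDerivation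

section NonUnital

variable {A : Type*} [NonUnitalNormedRing A] [NormedSpace ℂ A] {D : A → A}

lemma isLinearMap (hD : IsCDerivation D) : IsLinearMap ℂ D := ⟨hD.1, hD.2.1⟩

lemma annihilatesZeroProducts (hD : IsCDerivation D) : AnnihilatesZeroProducts D := by
  intro a b c hab hbc
  have h : D b * c + b * D c = 0 := by rw [← hD.2.2, hbc, hD.isLinearMap.map_zero]
  rw [mul_assoc, eq_neg_of_add_eq_zero_left h, mul_neg, ← mul_assoc, hab, zero_mul, neg_zero]

end NonUnital

lemma map_one {A : Type*} [NormedRing A] [NormedAlgebra ℂ A] {D : A → A}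
    (hD : IsCDerivation D) : D 1 = 0 := by
  simpa using hD.2.2 1 1

end IsCDerivation

namespace IsWeak2LocalDerivation

section NonUnital

variable {A : Type*} [NonUnitalNormedRing A] [NormedSpace ℂ A] {Δ : A → A}

theorem map_eq_smul_map {E : Type*} [AddCommGroup E] [Module ℂ E] [TopologicalSpace E]
    [SeparatingDual ℂ E] (hΔ : IsWeak2LocalDerivation Δ) (L : A →L[ℂ] E) (c : ℂ) {x y : A}
    (h : ∀ D : A → A, IsCDerivation D → L (D y) = c • L (D x)) :
    L (Δ y) = c • L (Δ x) := by
  refine SeparatingDual.eq_iff_forall_dual_eq (R := ℂ) |>.2 fun φ => ?_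
  obtain ⟨D, hD, hx, hy⟩ := hΔ x y (φ.comp L)
  simp only [ContinuousLinearMap.comp_apply] at hx hy
  rw [hy, h D hD, map_smul, map_smul, hx]

lemma map_eq_map {E : Type*} [AddCommGroup E] [Module ℂ E] [TopologicalSpace E]
    [SeparatingDual ℂ E] (hΔ : IsWeak2LocalDerivation Δ) (L : A →L[ℂ] E) {x y : A}
    (h : ∀ D : A → A, IsCDerivation D → L (D y) = L (D x)) :
    L (Δ y) = L (Δ x) := by
  simpa using hΔ.map_eq_smul_map L 1 (by simpa using h)

lemma map_eq_zero {E : Type*} [AddCommGroup E] [Module ℂ E] [TopologicalSpace E]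
    [SeparatingDual ℂ E] (hΔ : IsWeak2LocalDerivation Δ) (L : A →L[ℂ] E) {x : A}
    (h : ∀ D : A → A, IsCDerivation D → L (D x) = 0) : L (Δ x) = 0 := by
  simpa using hΔ.map_eq_smul_map L 0 (x := x) (by simpa using h)

lemma map_smul (hΔ : IsWeak2LocalDerivation Δ) (c : ℂ) (x : A) : Δ (c • x) = c • Δ x :=
  hΔ.map_eq_smul_map (.id ℂ A) c fun _ hD => hD.2.1 c x

end NonUnital

section Unital

variable {A : Type*} [NormedRing A] [NormedAlgebra ℂ A] {Δ : A → A}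

lemma map_one (hΔ : IsWeak2LocalDerivation Δ) : Δ 1 = 0 :=
  hΔ.map_eq_zero (.id ℂ A) fun _ hD => hD.map_one

lemma annihilatesZeroProducts (hΔ : IsWeak2LocalDerivation Δ) : AnnihilatesZeroProducts Δ :=
  fun a b c hab hbc => hΔ.map_eq_zero (ContinuousLinearMap.mulLeftRight ℂ A a c) fun _ hD =>
    hD.annihilatesZeroProducts a b c hab hbc

lemma mul_map_mul_congr (hΔ : IsWeak2LocalDerivation Δ) {a b x y : A}
    (hax : a * x = a * y) (hxb : x * b = y * b) : a * Δ x * b = a * Δ y * b := by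
  refine hΔ.map_eq_map (ContinuousLinearMap.mulLeftRight ℂ A a b) fun D hD => sub_eq_zero.1 ?_
  have h := hD.annihilatesZeroProducts a (x - y) b (by rw [mul_sub, hax, sub_self])
    (by rw [sub_mul, hxb, sub_self])
  simpa only [hD.isLinearMap.map_sub, mul_sub, sub_mul, ContinuousLinearMap.mulLeftRight_apply]
    using h

variable {J : TwoSidedIdeal A}

theorem map_add_of_ideal (hΔ : IsWeak2LocalDerivation Δ) (hsep : SeparatedByIdempotents J)
    (hadd : ∀ x ∈ J, ∀ y ∈ J, Δ (x + y) = Δ x + Δ y) (x y : A) :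
    Δ (x + y) = Δ x + Δ y := by
  refine sub_eq_zero.1 (hsep _ fun e he f hf hee hff => ?_)
  let trim (z : A) : A := z * f + e * z - e * z * f
  have trim_mem (z : A) : trim z ∈ J :=
    J.sub_mem (J.add_mem (J.mul_mem_left _ _ hf) (J.mul_mem_right _ _ he)) (J.mul_mem_left _ _ hf)
  have trim_add : trim (x + y) = trim x + trim y := by
    simp only [trim]
    noncomm_ring
  have map_trim (z : A) : e * Δ z * f = e * Δ (trim z) * f := by
    apply hΔ.mul_map_mul_congr
    · simp only [trim, mul_sub, mul_add, ← mul_assoc, hee.eq, add_sub_cancel_left]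
    · simp only [trim, sub_mul, add_mul, mul_assoc, hff.eq, add_sub_cancel_right]
  rw [mul_sub, sub_mul, map_trim, trim_add, hadd _ (trim_mem x) _ (trim_mem y)]
  simp only [mul_add, add_mul, map_trim x, map_trim y, sub_self]

theorem isCDerivation_of_ideal (hΔ : IsWeak2LocalDerivation Δ)
    (hspan : (J : Set A) ⊆ Submodule.span ℂ {p : A | IsIdempotentElem p})
    (hsep : SeparatedByIdempotents J)
    (hadd : ∀ x ∈ J, ∀ y ∈ J, Δ (x + y) = Δ x + Δ y) : IsCDerivation Δ := by
  have map_add := hΔ.map_add_of_ideal hsep hadd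
  let δ : A →ₗ[ℂ] A := { toFun := Δ, map_add' := map_add, map_smul' := hΔ.map_smul }
  have hδ : AnnihilatesZeroProducts δ := hΔ.annihilatesZeroProducts
  exact ⟨map_add, hΔ.map_smul, hδ.map_mul hΔ.map_one hspan hsep⟩

end Unital

end IsWeak2LocalDerivation

section FiniteRank

variable {X : Type*} [NormedAddCommGroup X] [NormedSpace ℂ X]

lemma IsCDerivation.exists_eq_commutator {D : (X →L[ℂ] X) → (X →L[ℂ] X)}
    (hD : IsCDerivation D) :
    ∃ T : X →ₗ[ℂ] X, ∀ (x : X →L[ℂ] X) (a : X), D x a = T (x a) - x (T a) := by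
  rcases subsingleton_or_nontrivial X with _ | _
  · exact ⟨0, fun _ _ => Subsingleton.elim _ _⟩
  obtain ⟨u, hu⟩ := exists_ne (0 : X)
  obtain ⟨f, hfu⟩ := SeparatingDual.exists_eq_one (R := ℂ) hu
  let rankOne : X →ₗ[ℂ] (X →L[ℂ] X) := ContinuousLinearMap.smulRightL ℂ X X f
  let T : X →ₗ[ℂ] X :=
    (ContinuousLinearMap.apply ℂ X u).toLinearMap ∘ₗ hD.isLinearMap.mk' D ∘ₗ rankOne
  refine ⟨T, fun x a => ?_⟩
  have mul_rankOne : x * rankOne a = rankOne (x a) := by ext; simp [rankOne]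
  have h : D (rankOne (x a)) u = D x a + x (D (rankOne a) u) := by
    rw [← mul_rankOne, hD.2.2]
    simp [rankOne, hfu]
  exact eq_sub_of_add_eq h.symm

/-- The finite-rank operator represented by a tensor: `f ⊗ a` represents `z ↦ f z • a`. -/
noncomputable def tensorOperator : StrongDual ℂ X ⊗[ℂ] X →ₗ[ℂ] (X →L[ℂ] X) :=
  TensorProduct.lift (ContinuousLinearMap.smulRightL ℂ X X).toLinearMap₁₂

/-- The functional `y ↦ tr (t y)` attached to a tensor `t`: on `f ⊗ a` it is `y ↦ f (y a)`.
Taking tensors rather than operators as arguments makes the trace linear by construction. -/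
noncomputable def tensorTrace :
    StrongDual ℂ X ⊗[ℂ] X →ₗ[ℂ] StrongDual ℂ (X →L[ℂ] X) :=
  TensorProduct.lift <| LinearMap.mk₂ ℂ (fun f a => f.comp (ContinuousLinearMap.apply ℂ X a))
    (fun _ _ _ => by ext; simp) (fun _ _ _ => by ext; simp)
    (fun _ _ _ => by ext; simp) (fun _ _ _ => by ext; simp)

@[simp]
lemma tensorOperator_tmul (f : StrongDual ℂ X) (a : X) :
    tensorOperator (f ⊗ₜ[ℂ] a) = f.smulRight a := rfl

@[simp]
lemma tensorTrace_tmul (f : StrongDual ℂ X) (a : X) (y : X →L[ℂ] X) :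
    tensorTrace (f ⊗ₜ[ℂ] a) y = f (y a) := rfl

lemma IsCDerivation.tensorTrace_skew {D : (X →L[ℂ] X) → (X →L[ℂ] X)} (hD : IsCDerivation D)
    (s t : StrongDual ℂ X ⊗[ℂ] X) :
    tensorTrace s (D (tensorOperator t)) + tensorTrace t (D (tensorOperator s)) = 0 := by
  induction s using TensorProduct.induction_on with
  | zero => simp [hD.isLinearMap.map_zero]
  | add s s' hs hs' =>
    simp only [map_add, hD.1, add_apply]
    linear_combination hs + hs'
  | tmul f a =>
    induction t using TensorProduct.induction_on with
    | zero => simp [hD.isLinearMap.map_zero]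
    | add t t' ht ht' =>
      simp only [map_add, hD.1, add_apply] at ht ht' ⊢
      linear_combination ht + ht'
    | tmul g b =>
      obtain ⟨T, hT⟩ := hD.exists_eq_commutator
      simp only [tensorOperator_tmul, tensorTrace_tmul, hT, ContinuousLinearMap.smulRight_apply,
        map_sub, map_smul, smul_eq_mul]
      ring

lemma IsCDerivation.tensorTrace_self {D : (X →L[ℂ] X) → (X →L[ℂ] X)} (hD : IsCDerivation D)
    (t : StrongDual ℂ X ⊗[ℂ] X) : tensorTrace t (D (tensorOperator t)) = 0 :=
  self_eq_neg.1 (eq_neg_of_add_eq_zero_left (hD.tensorTrace_skew t t))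

namespace IsWeak2LocalDerivation

variable {Δ : (X →L[ℂ] X) → (X →L[ℂ] X)}

lemma tensorTrace_self (hΔ : IsWeak2LocalDerivation Δ) (t : StrongDual ℂ X ⊗[ℂ] X) :
    tensorTrace t (Δ (tensorOperator t)) = 0 :=
  hΔ.map_eq_zero (tensorTrace t) fun _ hD => hD.tensorTrace_self t

-- Polarization has to be carried out with the single functional `tr ((s + t) ·)`, since only one
-- functional is available in the definition of a weak-2-local derivation.
lemma tensorTrace_skew (hΔ : IsWeak2LocalDerivation Δ) (s t : StrongDual ℂ X ⊗[ℂ] X) :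
    tensorTrace s (Δ (tensorOperator t)) = -tensorTrace t (Δ (tensorOperator s)) := by
  have polarized : tensorTrace (s + t) (Δ (tensorOperator t)) =
      (-1 : ℂ) • tensorTrace (s + t) (Δ (tensorOperator s)) := by
    refine hΔ.map_eq_smul_map (tensorTrace (s + t)) (-1) fun D hD => ?_
    have h := hD.tensorTrace_self (s + t)
    rw [map_add tensorOperator, hD.1, map_add (tensorTrace (s + t))] at h
    linear_combination h
  simp only [map_add, add_apply, hΔ.tensorTrace_self, smul_eq_mul]
    at polarized
  linear_combination polarized

lemma map_tensorOperator_add (hΔ : IsWeak2LocalDerivation Δ) (s t : StrongDual ℂ X ⊗[ℂ] X) :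
    Δ (tensorOperator (s + t)) = Δ (tensorOperator s) + Δ (tensorOperator t) := by
  ext a
  refine SeparatingDual.eq_iff_forall_dual_eq (R := ℂ) |>.2 fun f => ?_
  simp only [add_apply, map_add f, ← tensorTrace_tmul]
  simp only [hΔ.tensorTrace_skew (f ⊗ₜ a), map_add tensorTrace, add_apply,
    neg_add]

end IsWeak2LocalDerivation

lemma mul_tensorOperator_mem_range (x : X →L[ℂ] X) (t : StrongDual ℂ X ⊗[ℂ] X) :
    x * tensorOperator t ∈ LinearMap.range (tensorOperator (X := X)) := by
  induction t using TensorProduct.induction_on with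
  | zero => simp
  | add s t hs ht => simpa only [map_add, mul_add] using add_mem hs ht
  | tmul f a => exact ⟨f ⊗ₜ x a, by ext; simp⟩

lemma tensorOperator_mul_mem_range (t : StrongDual ℂ X ⊗[ℂ] X) (x : X →L[ℂ] X) :
    tensorOperator t * x ∈ LinearMap.range (tensorOperator (X := X)) := by
  induction t using TensorProduct.induction_on with
  | zero => simp
  | add s t hs ht => simpa only [map_add, add_mul] using add_mem hs ht
  | tmul f a => exact ⟨f.comp x ⊗ₜ a, by ext; simp⟩

/-- The ideal of finite-rank operators on a normed space, encoded as the operators represented by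
a tensor, so that the trace pairing applies to them. -/
noncomputable def finiteRankIdeal (X : Type*) [NormedAddCommGroup X] [NormedSpace ℂ X] :
    TwoSidedIdeal (X →L[ℂ] X) :=
  .mk' (LinearMap.range (tensorOperator (X := X))) (zero_mem _) add_mem neg_mem
    (by rintro x _ ⟨t, rfl⟩; exact mul_tensorOperator_mem_range x t)
    (by rintro _ x ⟨t, rfl⟩; exact tensorOperator_mul_mem_range t x)

lemma mem_finiteRankIdeal {x : X →L[ℂ] X} :
    x ∈ finiteRankIdeal X ↔ ∃ t, tensorOperator t = x :=
  TwoSidedIdeal.mem_mk' ..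

lemma isIdempotentElem_smulRight {f : StrongDual ℂ X} {a : X} (h : f a = 1) :
    IsIdempotentElem (f.smulRight a : X →L[ℂ] X) := by
  ext
  simp [h]

lemma smulRight_mem_span_isIdempotentElem_of_apply_ne_zero {f : StrongDual ℂ X} {a : X}
    (h : f a ≠ 0) :
    f.smulRight a ∈ Submodule.span ℂ {p : X →L[ℂ] X | IsIdempotentElem p} := by
  have normalize : f.smulRight a = f a • f.smulRight ((f a)⁻¹ • a) := by
    ext
    simp [smul_smul, mul_comm (f a), h]
  rw [normalize]
  exact Submodule.smul_mem _ _ <| Submodule.subset_span <|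
    isIdempotentElem_smulRight (by simp [h])

lemma smulRight_mem_span_isIdempotentElem (f : StrongDual ℂ X) (a : X) :
    f.smulRight a ∈ Submodule.span ℂ {p : X →L[ℂ] X | IsIdempotentElem p} := by
  by_cases hfa : f a = 0
  · rcases eq_or_ne a 0 with rfl | ha
    · simp
    obtain ⟨g, hga⟩ := SeparatingDual.exists_eq_one (R := ℂ) ha
    have split : f.smulRight a = (f + g).smulRight a - g.smulRight a := by
      ext
      simp [add_smul]
    rw [split]
    exact sub_mem
      (smulRight_mem_span_isIdempotentElem_of_apply_ne_zero (by simp [hfa, hga]))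
      (smulRight_mem_span_isIdempotentElem_of_apply_ne_zero (by simp [hga]))
  · exact smulRight_mem_span_isIdempotentElem_of_apply_ne_zero hfa

lemma finiteRankIdeal_subset_span_isIdempotentElem :
    (finiteRankIdeal X : Set (X →L[ℂ] X)) ⊆
      Submodule.span ℂ {p : X →L[ℂ] X | IsIdempotentElem p} := by
  intro x hx
  obtain ⟨t, rfl⟩ := mem_finiteRankIdeal.1 hx
  induction t using TensorProduct.induction_on with
  | zero => simp
  | add s t hs ht =>
    rw [map_add]
    exact add_mem (hs (mem_finiteRankIdeal.2 ⟨s, rfl⟩)) (ht (mem_finiteRankIdeal.2 ⟨t, rfl⟩))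
  | tmul f a => exact smulRight_mem_span_isIdempotentElem f a

lemma separatedByIdempotents_finiteRankIdeal : SeparatedByIdempotents (finiteRankIdeal X) := by
  intro z hz
  ext a
  by_contra hza
  have ha : a ≠ 0 := by
    rintro rfl
    simp at hza
  obtain ⟨f, hf⟩ := SeparatingDual.exists_eq_one (R := ℂ) hza
  obtain ⟨g, hg⟩ := SeparatingDual.exists_eq_one (R := ℂ) ha
  have corner : f.smulRight (z a) * z * g.smulRight a = 0 :=
    hz _ (mem_finiteRankIdeal.2 ⟨f ⊗ₜ z a, rfl⟩) _ (mem_finiteRankIdeal.2 ⟨g ⊗ₜ a, rfl⟩)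
      (isIdempotentElem_smulRight hf) (isIdempotentElem_smulRight hg)
  apply hza
  simpa [hf, hg] using DFunLike.congr_fun corner a

theorem IsWeak2LocalDerivation.isCDerivation_continuousLinearMap
    {Δ : (X →L[ℂ] X) → (X →L[ℂ] X)} (hΔ : IsWeak2LocalDerivation Δ) : IsCDerivation Δ := by
  refine hΔ.isCDerivation_of_ideal finiteRankIdeal_subset_span_isIdempotentElem
    separatedByIdempotents_finiteRankIdeal fun x hx y hy => ?_
  obtain ⟨s, rfl⟩ := mem_finiteRankIdeal.1 hx
  obtain ⟨t, rfl⟩ := mem_finiteRankIdeal.1 hy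
  rw [← map_add, hΔ.map_tensorOperator_add]

end FiniteRank

section ContinuousFunctions

lemma continuous_inv_sqrt_norm_smul {E : Type*} [NormedAddCommGroup E] [NormedSpace ℝ E] :
    Continuous fun x : E => (√‖x‖)⁻¹ • x := by
  refine continuous_iff_continuousAt.2 fun x => ?_
  rcases eq_or_ne x 0 with rfl | hx
  · have norm_le (y : E) : ‖(√‖y‖)⁻¹ • y‖ ≤ √‖y‖ := by
      rw [norm_smul, norm_inv, Real.norm_of_nonneg (Real.sqrt_nonneg _), inv_mul_eq_div,
        Real.div_sqrt]
    have sqrt_tendsto : Filter.Tendsto (fun y : E => √‖y‖) (nhds 0) (nhds 0) :=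
      Continuous.tendsto' (by fun_prop) _ _ (by simp)
    simpa [ContinuousAt] using squeeze_zero_norm norm_le sqrt_tendsto
  · have : √‖x‖ ≠ 0 := by simpa using hx
    fun_prop (disch := assumption)

variable {Ω A : Type*} [TopologicalSpace Ω] [NormedRing A]

lemma exists_eq_mul_of_apply_eq_zero [NormedAlgebra ℝ A] {f : C(Ω, A)} {t : Ω}
    (hf : f t = 0) : ∃ u v : C(Ω, A), f = u * v ∧ u t = 0 ∧ v t = 0 := by
  let u : C(Ω, A) := ⟨fun s => √‖f s‖ • (1 : A), by fun_prop⟩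
  let v : C(Ω, A) := ⟨fun s => (√‖f s‖)⁻¹ • f s, continuous_inv_sqrt_norm_smul.comp f.continuous⟩
  refine ⟨u, v, ?_, by simp [u, hf], by simp [v, hf]⟩
  ext s
  rcases eq_or_ne (f s) 0 with hs | hs
  · simp [u, v, hs]
  · have : √‖f s‖ ≠ 0 := by simpa using hs
    simp [u, v, smul_smul, this]

variable [CompactSpace Ω] [NormedAlgebra ℂ A]

lemma IsCDerivation.apply_congr {D : C(Ω, A) → C(Ω, A)} (hD : IsCDerivation D)
    {f g : C(Ω, A)} {t : Ω} (h : f t = g t) : D f t = D g t := by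
  obtain ⟨u, v, huv, hu, hv⟩ :=
    exists_eq_mul_of_apply_eq_zero (f := f - g) (t := t) (by simp [h])
  have vanish : D (f - g) t = 0 := by simp [huv, hD.2.2, hu, hv]
  rwa [hD.isLinearMap.map_sub, ContinuousMap.sub_apply, sub_eq_zero] at vanish

lemma IsCDerivation.fiber {D : C(Ω, A) → C(Ω, A)} (hD : IsCDerivation D) (t : Ω) :
    IsCDerivation fun a : A => D (.const Ω a) t :=
  ⟨fun a b => DFunLike.congr_fun (hD.1 (.const Ω a) (.const Ω b)) t,
    fun c a => DFunLike.congr_fun (hD.2.1 c (.const Ω a)) t,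
    fun a b => DFunLike.congr_fun (hD.2.2 (.const Ω a) (.const Ω b)) t⟩

namespace IsWeak2LocalDerivation

variable {Δ : C(Ω, A) → C(Ω, A)}

lemma apply_congr (hΔ : IsWeak2LocalDerivation Δ) {f g : C(Ω, A)} {t : Ω} (h : f t = g t) :
    Δ f t = Δ g t :=
  hΔ.map_eq_map (ContinuousMap.evalCLM ℂ t) fun _ hD => hD.apply_congr h

lemma fiber (hΔ : IsWeak2LocalDerivation Δ) (t : Ω) :
    IsWeak2LocalDerivation fun a : A => Δ (.const Ω a) t := by
  intro a b φ
  obtain ⟨D, hD, ha, hb⟩ := hΔ (.const Ω a) (.const Ω b) (φ.comp (ContinuousMap.evalCLM ℂ t))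
  exact ⟨fun a => D (.const Ω a) t, hD.fiber t, ha, hb⟩

theorem isCDerivation_of_fibers (hΔ : IsWeak2LocalDerivation Δ)
    (hfiber : ∀ t, IsCDerivation fun a : A => Δ (.const Ω a) t) : IsCDerivation Δ := by
  have eq_fiber (f : C(Ω, A)) (t : Ω) : Δ f t = Δ (.const Ω (f t)) t := hΔ.apply_congr rfl
  refine ⟨fun f g => ?_, fun c f => ?_, fun f g => ?_⟩ <;> ext1 t
  · simpa only [eq_fiber (f + g), ← eq_fiber f, ← eq_fiber g, ContinuousMap.add_apply]
      using (hfiber t).1 (f t) (g t)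
  · simpa only [eq_fiber (c • f), ← eq_fiber f, ContinuousMap.smul_apply]
      using (hfiber t).2.1 c (f t)
  · simpa only [eq_fiber (f * g), ← eq_fiber f, ← eq_fiber g, ContinuousMap.add_apply,
      ContinuousMap.mul_apply] using (hfiber t).2.2 (f t) (g t)

end IsWeak2LocalDerivation

end ContinuousFunctions

theorem stmt2_general {Ω X : Type*} [TopologicalSpace Ω] [CompactSpace Ω]
    [NormedAddCommGroup X] [NormedSpace ℂ X]
    (Δ : C(Ω, X →L[ℂ] X) → C(Ω, X →L[ℂ] X)) (hΔ : IsWeak2LocalDerivation Δ) :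
    IsCDerivation Δ :=
  hΔ.isCDerivation_of_fibers fun t => (hΔ.fiber t).isCDerivation_continuousLinearMap

theorem stmt2 {Ω H : Type*} [TopologicalSpace Ω] [CompactSpace Ω] [T2Space Ω]
    [NormedAddCommGroup H] [InnerProductSpace ℂ H] [CompleteSpace H]
    (Δ : C(Ω, H →L[ℂ] H) → C(Ω, H →L[ℂ] H)) (hΔ : IsWeak2LocalDerivation Δ) :
    IsCDerivation Δ :=
  stmt2_general Δ hΔ
end

section
/- Let Ω be a compact Hausdorff space and let A be a C*-algebra satisfying: (a) every weak-2-local derivation on A is linear and a derivation; and (b) every derivation D : C(Ω,A) → C(Ω,A) satisfies D(X)(t) = D(â)(t) for every X ∈ C(Ω,A) and t ∈ Ω, where a = X(t) and â denotes the constant function with value a. Then every weak-2-local derivation on C(Ω,A) is linear and a derivation. -/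
/-!
Composing functionals on `A` with evaluation at `t` yields enough functionals on `C(Ω, A)` that any
equality `D X t = D Y t` valid for all derivations `D` passes to a weak-2-local derivation `Δ`.
Hence `Δ X t` depends only on `X t`, through a map `A → A` which is itself a weak-2-local
derivation, and therefore a derivation.
-/

section SeparatingDual

variable {B E : Type*} [NonUnitalNormedRing B] [NormedSpace ℂ B]
  [AddCommGroup E] [TopologicalSpace E] [Module ℂ E] [SeparatingDual ℂ E]

theorem IsWeak2LocalDerivation.map_apply_eq_of_forall_isCDerivation {Δ : B → B}
    (hΔ : IsWeak2LocalDerivation Δ) (L : B →L[ℂ] E) {x y : B}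
    (h : ∀ D : B → B, IsCDerivation D → L (D x) = L (D y)) : L (Δ x) = L (Δ y) := by
  refine (SeparatingDual.eq_iff_forall_dual_eq (R := ℂ)).2 fun f ↦ ?_
  obtain ⟨D, hD, hx, hy⟩ := hΔ x y (f.comp L)
  calc
    f (L (Δ x)) = f (L (D x)) := hx
    _ = f (L (D y)) := congrArg f (h D hD)
    _ = f (L (Δ y)) := hy.symm

end SeparatingDual

section Fiberwise

variable {Ω A : Type*} [TopologicalSpace Ω]

/-- The map induced on the fiber `A` of `C(Ω, A)` over `t` by a self-map of `C(Ω, A)`: restrict it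
to the constant functions, a copy of `A` inside `C(Ω, A)`, and evaluate the result at `t`. -/
def fiberMap [TopologicalSpace A] (Δ : C(Ω, A) → C(Ω, A)) (t : Ω) (a : A) : A :=
  Δ (ContinuousMap.const Ω a) t

/-- A self-map of `C(Ω, A)` acts fiberwise if its value at `X` and `t` depends only on `X t`. This
is encoded by comparing `X` with the constant function of value `X t`; it lets one recover the map
from its fiber maps. -/
def IsFiberwise [TopologicalSpace A] (Δ : C(Ω, A) → C(Ω, A)) : Prop :=
  ∀ (X : C(Ω, A)) (t : Ω), Δ X t = fiberMap Δ t (X t)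

variable [CompactSpace Ω] [NonUnitalNormedRing A] [NormedSpace ℂ A] {Δ : C(Ω, A) → C(Ω, A)}

protected theorem IsCDerivation.fiberMap (hΔ : IsCDerivation Δ) (t : Ω) :
    IsCDerivation (fiberMap Δ t) := by
  obtain ⟨map_add, map_smul, leibniz⟩ := hΔ
  exact ⟨fun a b ↦ DFunLike.congr_fun (map_add (.const Ω a) (.const Ω b)) t,
    fun c a ↦ DFunLike.congr_fun (map_smul c (.const Ω a)) t,
    fun a b ↦ DFunLike.congr_fun (leibniz (.const Ω a) (.const Ω b)) t⟩

protected theorem IsWeak2LocalDerivation.fiberMap (hΔ : IsWeak2LocalDerivation Δ) (t : Ω) :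
    IsWeak2LocalDerivation (fiberMap Δ t) := by
  intro a b f
  obtain ⟨D, hD, hDa, hDb⟩ :=
    hΔ (.const Ω a) (.const Ω b) (f.comp (ContinuousMap.evalCLM ℂ t))
  exact ⟨fiberMap D t, hD.fiberMap t, hDa, hDb⟩

theorem IsWeak2LocalDerivation.isFiberwise (hΔ : IsWeak2LocalDerivation Δ)
    (h : ∀ D : C(Ω, A) → C(Ω, A), IsCDerivation D → IsFiberwise D) : IsFiberwise Δ :=
  fun X t ↦ hΔ.map_apply_eq_of_forall_isCDerivation (ContinuousMap.evalCLM ℂ t)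
    fun D hD ↦ h D hD X t

theorem IsFiberwise.isCDerivation (hΔ : IsFiberwise Δ)
    (h : ∀ t, IsCDerivation (fiberMap Δ t)) : IsCDerivation Δ := by
  refine ⟨fun X Y ↦ ?_, fun c X ↦ ?_, fun X Y ↦ ?_⟩ <;> ext t
  · simpa only [hΔ _ t, ContinuousMap.add_apply] using (h t).1 (X t) (Y t)
  · simpa only [hΔ _ t, ContinuousMap.smul_apply] using (h t).2.1 c (X t)
  · simpa only [hΔ _ t, ContinuousMap.add_apply, ContinuousMap.mul_apply] using
      (h t).2.2 (X t) (Y t)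

theorem stmt15_general (ha : ∀ δ : A → A, IsWeak2LocalDerivation δ → IsCDerivation δ)
    (hb : ∀ D : C(Ω, A) → C(Ω, A), IsCDerivation D → IsFiberwise D)
    (hΔ : IsWeak2LocalDerivation Δ) : IsCDerivation Δ :=
  (hΔ.isFiberwise hb).isCDerivation fun t ↦ ha (fiberMap Δ t) (hΔ.fiberMap t)

end Fiberwise

theorem stmt15 {Ω A : Type*} [TopologicalSpace Ω] [CompactSpace Ω] [T2Space Ω]
    [NormedRing A] [StarRing A] [CStarRing A] [NormedAlgebra ℂ A] [CompleteSpace A]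
    [StarModule ℂ A]
    (ha : ∀ Δ : A → A, IsWeak2LocalDerivation Δ → IsCDerivation Δ)
    (hb : ∀ D : C(Ω, A) → C(Ω, A), IsCDerivation D →
      ∀ (X : C(Ω, A)) (t : Ω), D X t = D (ContinuousMap.const Ω (X t)) t)
    (Δ : C(Ω, A) → C(Ω, A)) (hΔ : IsWeak2LocalDerivation Δ) :
    IsCDerivation Δ :=
  stmt15_general ha hb hΔ
end
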